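/- arXiv:2111.01213 — 3 statements merged into one kernel-verified Lean document; each statement's English description precedes it below -/
import Mathlib

section
/- Let X be a set and let θ be a map from the Point Algebra to subsets of X×X that preserves complement (θ(-a) = (X×X) \ θ(a) for all Point Algebra elements a) and preserves composition (θ(a;b) = θ(a);θ(b) for all Point Algebra elements a,b), and suppose there exists x₀ ∈ X with (x₀,x₀) ∈ θ(1). Then for every natural number n there exist x₁, x₂, …, xₙ ∈ X such that the points x₀, x₁, …, xₙ are pairwise distinct and for all 0 ≤ i < j ≤ n, (xᵢ, xⱼ) ∈ θ(≤) and (xⱼ, xᵢ) ∈ θ(>). -/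
/-- Relational composition of binary relations given as sets of pairs. -/
def relComp {X : Type*} (R S : Set (X × X)) : Set (X × X) :=
  {p | ∃ y, (p.1, y) ∈ R ∧ (y, p.2) ∈ S}

/-- The Point Algebra: the eight binary relations on ℚ given by
`0`, `1`, `=`, `≠`, `<`, `≤`, `>`, `≥`. -/
def PointAlgebra : Set (Set (ℚ × ℚ)) :=
  { (∅ : Set (ℚ × ℚ)), Set.univ,
    {p | p.1 = p.2}, {p | p.1 ≠ p.2},
    {p | p.1 < p.2}, {p | p.1 ≤ p.2},
    {p | p.1 > p.2}, {p | p.1 ≥ p.2} }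

theorem stmt2 {X : Type*} (θ : Set (ℚ × ℚ) → Set (X × X))
    (hneg : ∀ a ∈ PointAlgebra, θ (Set.univ \ a) = Set.univ \ θ a)
    (hcomp : ∀ a ∈ PointAlgebra, ∀ b ∈ PointAlgebra,
      θ (relComp a b) = relComp (θ a) (θ b))
    (x₀ : X) (hx₀ : (x₀, x₀) ∈ θ Set.univ) :
    ∀ n : ℕ, ∃ x : Fin (n + 1) → X, x 0 = x₀ ∧ Function.Injective x ∧
      ∀ i j : Fin (n + 1), i < j →
        (x i, x j) ∈ θ {p | p.1 ≤ p.2} ∧ (x j, x i) ∈ θ {p | p.1 > p.2} := by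
  have mLE : {p : ℚ × ℚ | p.1 ≤ p.2} ∈ PointAlgebra := by simp [PointAlgebra]
  have mG : {p : ℚ × ℚ | p.1 > p.2} ∈ PointAlgebra := by simp [PointAlgebra]
  have mZ : (∅ : Set (ℚ × ℚ)) ∈ PointAlgebra := by simp [PointAlgebra]
  -- the four identities of the Point Algebra that are needed, transported along θ
  have e1 : relComp {p : ℚ × ℚ | p.1 ≤ p.2} {p | p.1 > p.2} = Set.univ := by
    ext ⟨a, b⟩
    simp only [relComp, Set.mem_ofPred_eq, Set.mem_univ, iff_true]
    exact ⟨max a b + 1, by linarith [le_max_left a b], by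
      show b < max a b + 1
      linarith [le_max_right a b]⟩
  have e2 : relComp {p : ℚ × ℚ | p.1 ≤ p.2} {p | p.1 ≤ p.2} = {p | p.1 ≤ p.2} := by
    ext ⟨a, b⟩
    simp only [relComp, Set.mem_ofPred_eq]
    exact ⟨fun ⟨_, h1, h2⟩ => le_trans h1 h2, fun h => ⟨a, le_refl a, h⟩⟩
  have e3 : relComp {p : ℚ × ℚ | p.1 ≤ p.2} ∅ = ∅ := by
    ext ⟨a, b⟩
    simp [relComp]
  have e4 : relComp ∅ {p : ℚ × ℚ | p.1 > p.2} = ∅ := by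
    ext ⟨a, b⟩
    simp [relComp]
  have c1 := hcomp _ mLE _ mG
  have c2 := hcomp _ mLE _ mLE
  have c3 := hcomp _ mLE _ mZ
  have c4 := hcomp _ mZ _ mG
  rw [e1] at c1
  rw [e2] at c2
  rw [e3] at c3
  rw [e4] at c4
  have nLE := hneg _ mLE
  have e5 : Set.univ \ {p : ℚ × ℚ | p.1 ≤ p.2} = {p | p.1 > p.2} := by
    ext ⟨a, b⟩
    simp
  rw [e5] at nLE
  have nZ := hneg _ mZ
  rw [Set.sdiff_empty] at nZ
  have hG : ∀ a b, (a, b) ∈ θ {p | p.1 > p.2} ↔ (a, b) ∉ θ {p | p.1 ≤ p.2} := by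
    intro a b
    rw [nLE]
    simp
  have hU : ∀ a b, (a, b) ∈ θ Set.univ ↔ (a, b) ∉ θ ∅ := by
    intro a b
    rw [nZ]
    simp
  have tr : ∀ a b c, (a, b) ∈ θ {p | p.1 ≤ p.2} → (b, c) ∈ θ {p | p.1 ≤ p.2} →
      (a, c) ∈ θ {p | p.1 ≤ p.2} := by
    intro a b c h1 h2
    rw [c2]
    exact ⟨b, h1, h2⟩
  have step : ∀ a : {a : X // (a, a) ∈ θ Set.univ}, ∃ b : {a : X // (a, a) ∈ θ Set.univ},
      (a.1, b.1) ∈ θ {p | p.1 ≤ p.2} ∧ (b.1, a.1) ∈ θ {p | p.1 > p.2} := by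
    rintro ⟨a, ha⟩
    have ha' := ha
    rw [c1] at ha'
    obtain ⟨b, h1, h2⟩ := ha'
    refine ⟨⟨b, ?_⟩, h1, h2⟩
    rw [hU]
    intro hb
    have hab : (a, b) ∈ θ ∅ := by
      rw [c3]
      exact ⟨b, h1, hb⟩
    refine (hU a a).1 ha ?_
    rw [c4]
    exact ⟨b, hab, h2⟩
  choose g hg1 hg2 using step
  let f : ℕ → {a : X // (a, a) ∈ θ Set.univ} := fun k => g^[k] ⟨x₀, hx₀⟩
  have fs : ∀ k, f (k + 1) = g (f k) := fun k => Function.iterate_succ_apply' g k _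
  have f1 : ∀ k, ((f k).1, (f (k + 1)).1) ∈ θ {p | p.1 ≤ p.2} := by
    intro k
    rw [fs]
    exact hg1 _
  have f2 : ∀ k, ((f (k + 1)).1, (f k).1) ∉ θ {p | p.1 ≤ p.2} := by
    intro k
    rw [fs, ← hG]
    exact hg2 _
  have up : ∀ i j, i < j → ((f i).1, (f j).1) ∈ θ {p | p.1 ≤ p.2} := by
    intro i j hij
    induction j, hij using Nat.le_induction with
    | base => exact f1 i
    | succ j _ ih => exact tr _ _ _ ih (f1 j)
  have dn : ∀ i j, i < j → ((f j).1, (f i).1) ∉ θ {p | p.1 ≤ p.2} := by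
    intro i j hij h
    rcases Nat.eq_or_lt_of_le (Nat.succ_le_of_lt hij) with rfl | hlt
    · exact f2 i h
    · exact f2 i (tr _ _ _ (up _ _ hlt) h)
  intro n
  refine ⟨fun i => (f i.1).1, rfl, ?_, fun i j hij => ⟨up _ _ hij, (hG _ _).2 (dn _ _ hij)⟩⟩
  intro i j hij
  have hij' : (f i.1).1 = (f j.1).1 := hij
  rcases lt_trichotomy i j with h | h | h
  · have h1 := up _ _ h
    have h2 := dn _ _ h
    rw [hij'] at h1 h2
    exact absurd h1 h2
  · exact h
  · have h1 := up _ _ h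
    have h2 := dn _ _ h
    rw [hij'] at h1 h2
    exact absurd h1 h2
end

section
/- Let S be a finite relation algebra with set of atoms A, and let θ : S → P(A×A) be defined by (a,b) ∈ θ(s) ↔ b ≤ a;s. Then θ preserves composition: for all s, t ∈ S, θ(s;t) equals the relational composition θ(s);θ(t) = {(a,c) ∈ A×A | ∃b ∈ A, (a,b) ∈ θ(s) ∧ (b,c) ∈ θ(t)}. -/
/-- A relation algebra: a Boolean algebra with an associative composition `comp`,
a converse `conv`, and an identity element `one'`, satisfying the standard axioms
including the Peircean law. -/
class RelationAlgebra (S : Type*) extends BooleanAlgebra S where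
  comp : S → S → S
  conv : S → S
  one' : S
  comp_assoc : ∀ a b c : S, comp (comp a b) c = comp a (comp b c)
  comp_sup_left : ∀ a b c : S, comp (a ⊔ b) c = comp a c ⊔ comp b c
  comp_sup_right : ∀ a b c : S, comp a (b ⊔ c) = comp a b ⊔ comp a c
  comp_bot : ∀ a : S, comp a ⊥ = ⊥
  bot_comp : ∀ a : S, comp ⊥ a = ⊥
  comp_one' : ∀ a : S, comp a one' = a
  one'_comp : ∀ a : S, comp one' a = a
  conv_conv : ∀ a : S, conv (conv a) = a
  conv_comp : ∀ a b : S, conv (comp a b) = comp (conv b) (conv a)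
  conv_sup : ∀ a b : S, conv (a ⊔ b) = conv a ⊔ conv b
  conv_one' : conv one' = one'
  peirce₁ : ∀ a b c : S, a ⊓ comp b c = ⊥ ↔ b ⊓ comp a (conv c) = ⊥
  peirce₂ : ∀ a b c : S, a ⊓ comp b c = ⊥ ↔ c ⊓ comp (conv b) a = ⊥

open RelationAlgebra

/-- The set of atoms of a relation algebra, as a subtype. -/
def Atoms (S : Type*) [RelationAlgebra S] : Type _ := {a : S // IsAtom a}

/-- The map `θ : S → ℘(A × A)` given by `(a, b) ∈ θ(s) ↔ b ≤ a ; s`,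
where `A` is the set of atoms of `S`. -/
def theta {S : Type*} [RelationAlgebra S] (s : S) : Set (Atoms S × Atoms S) :=
  {p | p.2.val ≤ comp p.1.val s}

theorem stmt5 {S : Type*} [RelationAlgebra S] [Finite S] (s t : S) :
    theta (comp s t) =
      {p : Atoms S × Atoms S | ∃ b : Atoms S, (p.1, b) ∈ theta s ∧ (b, p.2) ∈ theta t} := by
  have mono : ∀ x y z : S, x ≤ y → comp x z ≤ comp y z := by
    intro x y z h
    have := comp_sup_left x y z
    rw [sup_eq_right.mpr h] at this
    rw [this]
    exact le_sup_left
  ext ⟨⟨a, ha⟩, ⟨c, hc⟩⟩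
  simp only [theta, Set.mem_setOf_eq]
  constructor
  · intro h
    rw [← comp_assoc] at h
    have h1 : comp a s ⊓ comp c (conv t) ≠ ⊥ := by
      intro h2
      rw [← peirce₁, inf_eq_left.mpr h] at h2
      exact hc.1 h2
    obtain ⟨b, hb, hle⟩ := (IsAtomic.eq_bot_or_exists_atom_le
      (comp a s ⊓ comp c (conv t))).resolve_left h1
    refine ⟨⟨b, hb⟩, hle.trans inf_le_left, ?_⟩
    have h3 : c ⊓ comp b t ≠ ⊥ := by
      intro h2
      rw [peirce₁, inf_eq_left.mpr (hle.trans inf_le_right)] at h2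
      exact hb.1 h2
    exact inf_eq_left.mp ((hc.le_iff.mp inf_le_left).resolve_left h3)
  · rintro ⟨⟨b, hb⟩, h1, h2⟩
    rw [← comp_assoc]
    exact h2.trans (mono _ _ _ h1)
end

section
/- Let S be a finite relation algebra with set of atoms A, and let θ : S → P(A×A) be defined by (a,b) ∈ θ(s) ↔ b ≤ a;s. Then θ is a finite representation of S in every signature of operations from {0, 1, ⊔, 1', ⌣, ;}: θ is injective, θ(0) = ∅, θ(s) ⊆ θ(1) for all s, θ(s ⊔ t) = θ(s) ∪ θ(t), θ(1') = {(a,a) | a ∈ A}, θ(s⌣) is the converse relation of θ(s), and θ(s;t) is the relational composition of θ(s) and θ(t). Consequently, every finite structure in a Relation Algebra reduct signature containing neither {-,;} nor {⊓,;} that embeds into a finite relation algebra is finitely representable. -/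
open RelationAlgebra

theorem ra_comp_mono_right {S : Type*} [RelationAlgebra S] (a : S) {b c : S} (h : b ≤ c) :
    comp a b ≤ comp a c := by
  rw [← sup_eq_right, ← comp_sup_right, sup_eq_right.2 h]

theorem ra_comp_mono_left {S : Type*} [RelationAlgebra S] {a b : S} (c : S) (h : a ≤ b) :
    comp a c ≤ comp b c := by
  rw [← sup_eq_right, ← comp_sup_left, sup_eq_right.2 h]

theorem ra_atom_le_iff {S : Type*} [RelationAlgebra S] {a s : S} (ha : IsAtom a) :
    a ≤ s ↔ a ⊓ s ≠ ⊥ := by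
  rw [ne_eq, ← disjoint_iff, ha.not_disjoint_iff_le]

/-- Peircean law on atoms. -/
theorem ra_flip {S : Type*} [RelationAlgebra S] {b a : S} (hb : IsAtom b) (ha : IsAtom a) (s : S) :
    b ≤ comp a (conv s) ↔ a ≤ comp b s := by
  rw [ra_atom_le_iff hb, ra_atom_le_iff ha, ne_eq, ne_eq, peirce₁ a b s]

theorem ra_le_of_theta {S : Type*} [RelationAlgebra S] [Finite S] {s t : S}
    (h : theta s ⊆ theta t) : s ≤ t := by
  rw [BooleanAlgebra.le_iff_atom_le_imp]
  intro x hx hxs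
  have h1 : x ⊓ comp one' x ≠ ⊥ := by
    rw [one'_comp, inf_idem]
    exact hx.1
  rw [ne_eq, peirce₁] at h1
  obtain ⟨e, he, hle⟩ := (eq_bot_or_exists_atom_le _).resolve_left h1
  have h2 : x ≤ comp e x := (ra_flip he hx x).1 (hle.trans inf_le_right)
  have h3 : ((⟨e, he⟩, ⟨x, hx⟩) : Atoms S × Atoms S) ∈ theta t :=
    h (show x ≤ comp e s from h2.trans (ra_comp_mono_right e hxs))
  have h4 : x ≤ comp e t := h3
  have h5 := h4.trans (ra_comp_mono_left t (hle.trans inf_le_left))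
  rwa [one'_comp] at h5

/-- `θ` is a finite representation of a finite relation algebra `S` in every
signature of operations from `{0, 1, ⊔, 1', ⌣, ;}`: it is injective and correctly
represents the constants `⊥`, `⊤`, join, the identity, converse, and composition
as genuine operations on binary relations over the (finite) set of atoms. -/
theorem stmt12 {S : Type*} [RelationAlgebra S] [Finite S] :
    Function.Injective (theta : S → Set (Atoms S × Atoms S)) ∧
    theta (⊥ : S) = (∅ : Set (Atoms S × Atoms S)) ∧
    (∀ s : S, theta s ⊆ theta (⊤ : S)) ∧
    (∀ s t : S, theta (s ⊔ t) = theta s ∪ theta t) ∧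
    theta (one' : S) = {p : Atoms S × Atoms S | p.1 = p.2} ∧
    (∀ s : S, theta (conv s) = {p : Atoms S × Atoms S | (p.2, p.1) ∈ theta s}) ∧
    (∀ s t : S, theta (comp s t) =
      {p : Atoms S × Atoms S | ∃ b : Atoms S, (p.1, b) ∈ theta s ∧ (b, p.2) ∈ theta t}) := by
  refine ⟨?_, ?_, ?_, ?_, ?_, ?_, ?_⟩
  · intro s t h
    exact le_antisymm (ra_le_of_theta h.le) (ra_le_of_theta h.ge)
  · ext ⟨a, b⟩
    simp only [theta, Set.mem_ofPred_eq, comp_bot, Set.mem_empty_iff_false, iff_false]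
    intro h
    exact b.2.1 (le_bot_iff.1 h)
  · intro s p hp
    exact le_trans hp (ra_comp_mono_right _ le_top)
  · intro s t
    ext ⟨a, b⟩
    simp only [theta, Set.mem_ofPred_eq, comp_sup_right, Set.mem_union]
    rw [ra_atom_le_iff b.2, ra_atom_le_iff b.2, ra_atom_le_iff b.2, inf_sup_left, ne_eq,
      sup_eq_bot_iff, not_and_or]
  · ext ⟨a, b⟩
    simp only [theta, Set.mem_ofPred_eq, comp_one']
    constructor
    · intro h
      exact Subtype.ext ((a.2.le_iff_eq b.2.1).1 h).symm
    · intro h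
      exact (congrArg Subtype.val h).ge
  · intro s
    ext ⟨a, b⟩
    exact ra_flip b.2 a.2 s
  · intro s t
    ext ⟨a, c⟩
    simp only [theta, Set.mem_ofPred_eq]
    rw [← comp_assoc]
    constructor
    · intro h
      rw [ra_atom_le_iff c.2, ne_eq, peirce₁] at h
      obtain ⟨b, hb, hle⟩ := (eq_bot_or_exists_atom_le _).resolve_left h
      exact ⟨⟨b, hb⟩, hle.trans inf_le_left, (ra_flip hb c.2 t).1 (hle.trans inf_le_right)⟩
    · rintro ⟨b, h1, h2⟩
      exact h2.trans (ra_comp_mono_left _ h1)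
end
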